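/- arXiv:2310.01706 — 2 statements merged into one kernel-verified Lean document; each statement's English description precedes it below -/
import Mathlib

section
/- In the conditioned n-bit majority MDP with an arbitrary condition C : {0,1}^n → Bool: for every x ∈ {0,1}^n, every T ∈ ℕ, and every action sequence (a_1, …, a_T) ∈ {0,1}^T, if the trajectory s_1 = (0_b, x), s_{t+1} = T_C(s_t, a_t) satisfies s_{T+1} = (1_b, s_reward), then T ≥ 2^b − 1 + d(x, s_reward). -/
/-!
Each step either advances the control bits by `f` or flips at most one representation bit, so
after `T` steps the control bits are `f^[k] 0_b` and the representation bits are within Hamming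
distance `m` of `x`, for some `k + m = T` (`majTrajC_split`). It remains to see that the orbit of
`0_b` cannot hit `1_b` before time `2^b - 1` (`le_of_iterate_eq_oneStr`): the iterates
`1, …, 2^b - 1` cover all `2^b - 1` nonzero strings, hence are pairwise distinct, while `1_b` is a
fixed point, so an early hit would make a later iterate repeat.
-/

/-- The all-false (all-zero) bit string of length `ℓ`. -/
def zeroStr (ℓ : ℕ) : Fin ℓ → Bool := fun _ => false

/-- The all-true (all-one) bit string of length `ℓ`. -/
def oneStr (ℓ : ℕ) : Fin ℓ → Bool := fun _ => true

/-- `f` is a control function over `{0,1}^b`: it fixes the all-one string, and the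
iterates `f^(k)(0_b)` for `k = 1, …, 2^b − 1` cover exactly `{0,1}^b ∖ {0_b}`. -/
def IsControlFunc (b : ℕ) (f : (Fin b → Bool) → (Fin b → Bool)) : Prop :=
  f (oneStr b) = oneStr b ∧
    (fun k => f^[k] (zeroStr b)) '' Set.Icc 1 (2 ^ b - 1) = {v | v ≠ zeroStr b}

/-- The value of a length-`b` bit string as a most-significant-bit-first binary number. -/
def bitVal {b : ℕ} (c : Fin b → Bool) : ℕ :=
  ∑ j : Fin b, if c j then 2 ^ (b - 1 - (j : ℕ)) else 0

/-- The Hamming distance between two bit strings. -/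
def hammDist {n : ℕ} (x y : Fin n → Bool) : ℕ :=
  (Finset.univ.filter fun i => x i ≠ y i).card

/-- The transition of the conditioned `n`-bit majority MDP (`n = 2^b − 1`): on
action `1` with nonzero control bits and satisfied condition `C`, flip the
`val(c)`-th (1-indexed) representation bit; otherwise apply the control function
to the control bits. -/
def majStepC (b : ℕ) (f : (Fin b → Bool) → (Fin b → Bool))
    (C : (Fin (2 ^ b - 1) → Bool) → Bool)
    (s : (Fin b → Bool) × (Fin (2 ^ b - 1) → Bool)) (a : Bool) :
    (Fin b → Bool) × (Fin (2 ^ b - 1) → Bool) :=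
  if a = true ∧ s.1 ≠ zeroStr b ∧ C s.2 = true then
    (s.1, fun i => if (i : ℕ) + 1 = bitVal s.1 then !(s.2 i) else s.2 i)
  else (f s.1, s.2)

/-- The trajectory induced by an action sequence `a`: `majTrajC b f C s a 0 = s`
(this is `s_1`) and `majTrajC b f C s a t` is the state `s_{t+1}`. -/
def majTrajC (b : ℕ) (f : (Fin b → Bool) → (Fin b → Bool))
    (C : (Fin (2 ^ b - 1) → Bool) → Bool)
    (s : (Fin b → Bool) × (Fin (2 ^ b - 1) → Bool)) (a : ℕ → Bool) :
    ℕ → (Fin b → Bool) × (Fin (2 ^ b - 1) → Bool)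
  | 0 => s
  | t + 1 => majStepC b f C (majTrajC b f C s a t) (a t)

/-- The optimal value of the conditioned majority MDP with horizon `H = 2^b + n`:
the maximal, over action sequences, number of time steps `t ∈ {1, …, H}` with
`s_t = (1_b, s_reward)`. -/
noncomputable def majVC (b : ℕ) (f : (Fin b → Bool) → (Fin b → Bool))
    (C : (Fin (2 ^ b - 1) → Bool) → Bool) (sr : Fin (2 ^ b - 1) → Bool)
    (s : (Fin b → Bool) × (Fin (2 ^ b - 1) → Bool)) : ℕ :=
  sSup {v | ∃ a : ℕ → Bool,
    v = ((Finset.range (2 ^ b + (2 ^ b - 1))).filter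
          fun t => majTrajC b f C s a t = (oneStr b, sr)).card}

lemma hammDist_triangle {n : ℕ} (x y z : Fin n → Bool) :
    hammDist x z ≤ hammDist x y + hammDist y z :=
  hammingDist_triangle x y z

/-- At most one coordinate `i` satisfies `i + 1 = v`, so a flip step moves by distance at most
one (by zero when `v` is not a valid 1-based index). -/
lemma hammDist_flip_le {n : ℕ} (y : Fin n → Bool) (v : ℕ) :
    hammDist y (fun i => if (i : ℕ) + 1 = v then !(y i) else y i) ≤ 1 := by
  unfold hammDist
  rw [Finset.card_le_one]
  intro i hi j hj
  simp only [Finset.mem_filter, Finset.mem_univ, true_and] at hi hj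
  have hi' : (i : ℕ) + 1 = v := by by_contra hne; simp [hne] at hi
  have hj' : (j : ℕ) + 1 = v := by by_contra hne; simp [hne] at hj
  exact Fin.ext (by omega)

/-- The time `t` splits into `k` control steps and `m` flip steps. -/
lemma majTrajC_split (b : ℕ) (f : (Fin b → Bool) → (Fin b → Bool))
    (C : (Fin (2 ^ b - 1) → Bool) → Bool) (c : Fin b → Bool)
    (x : Fin (2 ^ b - 1) → Bool) (a : ℕ → Bool) (t : ℕ) :
    ∃ k m, k + m = t ∧ (majTrajC b f C (c, x) a t).1 = f^[k] c ∧
      hammDist x (majTrajC b f C (c, x) a t).2 ≤ m := by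
  induction t with
  | zero => exact ⟨0, 0, rfl, rfl, by simp [majTrajC, hammDist]⟩
  | succ t ih =>
    obtain ⟨k, m, hkm, hc, hd⟩ := ih
    simp only [majTrajC, majStepC]
    split_ifs with hflip
    · exact ⟨k, m + 1, by omega, hc,
        (hammDist_triangle _ _ _).trans (Nat.add_le_add hd (hammDist_flip_le _ _))⟩
    · exact ⟨k + 1, m, by omega, by rw [Function.iterate_succ_apply', hc], hd⟩

/-- The iterates `f^(k)(0_b)`, `1 ≤ k ≤ 2^b - 1`, are pairwise distinct, by counting. -/
lemma IsControlFunc.injOn {b : ℕ} {f : (Fin b → Bool) → (Fin b → Bool)}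
    (hf : IsControlFunc b f) :
    Set.InjOn (fun k => f^[k] (zeroStr b)) (Set.Icc 1 (2 ^ b - 1)) := by
  have himg : (Finset.Icc 1 (2 ^ b - 1)).image (fun k => f^[k] (zeroStr b)) =
      Finset.univ.erase (zeroStr b) := by
    apply Finset.coe_injective
    rw [Finset.coe_image, Finset.coe_Icc, hf.2]
    ext v
    simp
  rw [← Finset.coe_Icc]
  apply Finset.injOn_of_card_image_eq
  rw [himg, Finset.card_erase_of_mem (Finset.mem_univ _)]
  simp

lemma le_of_iterate_eq_oneStr {b : ℕ} (hb : 1 ≤ b) {f : (Fin b → Bool) → (Fin b → Bool)}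
    (hf : IsControlFunc b f) {k : ℕ} (hk : f^[k] (zeroStr b) = oneStr b) : 2 ^ b - 1 ≤ k := by
  by_contra! hlt
  have hk0 : 1 ≤ k := by
    rcases Nat.eq_zero_or_pos k with rfl | hpos
    · have := congrFun hk ⟨0, hb⟩
      simp [zeroStr, oneStr] at this
    · exact hpos
  -- `1_b` is fixed by `f`, so the iterates `k` and `k + 1 ≤ 2^b - 1` coincide.
  have heq : f^[k] (zeroStr b) = f^[k + 1] (zeroStr b) := by
    rw [Function.iterate_succ_apply', hk, hf.1]
  have := hf.injOn ⟨hk0, hlt.le⟩ ⟨by omega, hlt⟩ heq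
  omega

/-- Lower bound on the time to reach the reward state in the conditioned majority
MDP with an arbitrary condition `C`: any action sequence whose trajectory starting
at `(0_b, x)` reaches `(1_b, s_reward)` after `T` steps satisfies
`T ≥ 2^b − 1 + d(x, s_reward)`. -/
theorem majMDPC_reach_lower_bound (b : ℕ) (hb : 1 ≤ b)
    (f : (Fin b → Bool) → (Fin b → Bool)) (hf : IsControlFunc b f)
    (sr : Fin (2 ^ b - 1) → Bool) (C : (Fin (2 ^ b - 1) → Bool) → Bool)
    (x : Fin (2 ^ b - 1) → Bool) (T : ℕ) (a : ℕ → Bool)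
    (h : majTrajC b f C (zeroStr b, x) a T = (oneStr b, sr)) :
    2 ^ b - 1 + hammDist x sr ≤ T := by
  obtain ⟨k, m, hkm, hc, hd⟩ := majTrajC_split b f C (zeroStr b) x a T
  rw [h] at hc hd
  have hk := le_of_iterate_eq_oneStr hb hf hc.symm
  simp only at hd
  omega
end

section
/- In the conditioned n-bit majority MDP: suppose A ⊆ {1, …, n} is such that C(x) = true for every x ∈ {0,1}^n with x_i = (s_reward)_i for all i ∉ A. Then for every x ∈ {0,1}^n with x_i = (s_reward)_i for all i ∉ A, there exists an action sequence of length exactly T = 2^b − 1 + d(x, s_reward) whose induced trajectory s_1 = (0_b, x), s_{t+1} = T_C(s_t, a_t) satisfies s_{T+1} = (1_b, s_reward). -/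
theorem sum_testBit_range (m b : ℕ) :
    ∑ i ∈ Finset.range b, (if m.testBit i then 2 ^ i else 0) = m % 2 ^ b := by
  induction b with
  | zero => simp [Nat.mod_one]
  | succ b ih =>
    rw [Finset.sum_range_succ, ih, Nat.mod_pow_succ, ← Nat.toNat_testBit]
    cases m.testBit b <;> simp

theorem exists_bitVal_eq (b m : ℕ) (hm : m < 2 ^ b) : ∃ c : Fin b → Bool, bitVal c = m := by
  refine ⟨fun j => m.testBit (b - 1 - j), ?_⟩
  unfold bitVal
  rw [Fin.sum_univ_eq_sum_range (fun j => if m.testBit (b - 1 - j) then 2 ^ (b - 1 - j) else 0) b,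
    Finset.sum_range_reflect (fun i => if m.testBit i then 2 ^ i else 0) b,
    sum_testBit_range, Nat.mod_eq_of_lt hm]

/-- Flipping a wrong bit lowers the Hamming distance by exactly one. -/
theorem hammDist_flip {n : ℕ} (y sr : Fin n → Bool) (v : ℕ) (i : Fin n) (hi : (i : ℕ) + 1 = v)
    (hne : y i ≠ sr i) :
    hammDist (fun j : Fin n => if (j : ℕ) + 1 = v then !(y j) else y j) sr + 1
      = hammDist y sr := by
  unfold hammDist
  have hmem : i ∈ Finset.univ.filter fun j => y j ≠ sr j := by simpa using hne
  rw [← Finset.card_erase_add_one hmem]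
  congr 2
  ext j
  by_cases hj : j = i
  · subst hj
    simp only [hi, if_true, Finset.mem_filter, Finset.mem_univ, true_and, Finset.mem_erase]
    cases h1 : y j <;> cases h2 : sr j <;> simp_all
  · have : (j : ℕ) + 1 ≠ v := fun h => hj (Fin.ext (by omega))
    simp [this, hj]

open Classical in
/-- The greedy policy: flip if and only if the control string is nonzero and addresses (with
1-based index) a bit that differs from `sr`. -/
noncomputable def greedyAct (b : ℕ) (sr : Fin (2 ^ b - 1) → Bool)
    (s : (Fin b → Bool) × (Fin (2 ^ b - 1) → Bool)) : Bool :=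
  decide (s.1 ≠ zeroStr b ∧ ∃ i : Fin (2 ^ b - 1), (i : ℕ) + 1 = bitVal s.1 ∧ s.2 i ≠ sr i)

/-- One step of the closed loop in which actions are chosen by `greedyAct`. -/
noncomputable def greedyStep (b : ℕ) (f : (Fin b → Bool) → (Fin b → Bool))
    (C : (Fin (2 ^ b - 1) → Bool) → Bool) (sr : Fin (2 ^ b - 1) → Bool)
    (s : (Fin b → Bool) × (Fin (2 ^ b - 1) → Bool)) :
    (Fin b → Bool) × (Fin (2 ^ b - 1) → Bool) :=
  majStepC b f C s (greedyAct b sr s)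

/-- The closed loop is the trajectory of the open-loop sequence of actions it takes. -/
theorem majTrajC_greedy (b : ℕ) (f : (Fin b → Bool) → (Fin b → Bool))
    (C : (Fin (2 ^ b - 1) → Bool) → Bool) (sr : Fin (2 ^ b - 1) → Bool)
    (s : (Fin b → Bool) × (Fin (2 ^ b - 1) → Bool)) (t : ℕ) :
    majTrajC b f C s (fun t => greedyAct b sr ((greedyStep b f C sr)^[t] s)) t
      = (greedyStep b f C sr)^[t] s := by
  induction t with
  | zero => rfl
  | succ t ih => rw [majTrajC, ih, Function.iterate_succ_apply']; rfl

theorem greedyStep_advance (b : ℕ) (f : (Fin b → Bool) → (Fin b → Bool))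
    (C : (Fin (2 ^ b - 1) → Bool) → Bool) (sr : Fin (2 ^ b - 1) → Bool)
    (c : Fin b → Bool) (y : Fin (2 ^ b - 1) → Bool)
    (h : c = zeroStr b ∨ ∀ i : Fin (2 ^ b - 1), (i : ℕ) + 1 = bitVal c → y i = sr i) :
    greedyStep b f C sr (c, y) = (f c, y) := by
  have : greedyAct b sr (c, y) = false := by
    simp only [greedyAct, decide_eq_false_iff_not]
    rintro ⟨h0, i, hi, hne⟩
    rcases h with h | h
    · exact h0 h
    · exact hne (h i hi)
  simp [greedyStep, majStepC, this]

theorem greedyStep_flip (b : ℕ) (f : (Fin b → Bool) → (Fin b → Bool))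
    (C : (Fin (2 ^ b - 1) → Bool) → Bool) (sr : Fin (2 ^ b - 1) → Bool)
    (c : Fin b → Bool) (y : Fin (2 ^ b - 1) → Bool) (hc : c ≠ zeroStr b) (hC : C y = true)
    (i : Fin (2 ^ b - 1)) (hi : (i : ℕ) + 1 = bitVal c) (hne : y i ≠ sr i) :
    greedyStep b f C sr (c, y) =
      (c, fun j : Fin (2 ^ b - 1) => if (j : ℕ) + 1 = bitVal c then !(y j) else y j) := by
  have : greedyAct b sr (c, y) = true := by
    simp only [greedyAct, decide_eq_true_eq]
    exact ⟨hc, i, hi, hne⟩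
  simp [greedyStep, majStepC, this, hc, hC]

/-- For each `k ≤ 2^b − 1` there is a time `m` at which the control string is `f^(k)(0_b)`, all
bits addressed by `f^(1)(0_b), …, f^(k)(0_b)` are correct, the bits outside `A` agree
with `sr`, and `m` plus the current distance to `sr` equals `k` plus the initial distance. -/
theorem greedy_invariant (b : ℕ)
    (f : (Fin b → Bool) → (Fin b → Bool)) (hf : IsControlFunc b f)
    (sr : Fin (2 ^ b - 1) → Bool) (C : (Fin (2 ^ b - 1) → Bool) → Bool)
    (A : Finset (Fin (2 ^ b - 1)))
    (hA : ∀ x : Fin (2 ^ b - 1) → Bool, (∀ i ∉ A, x i = sr i) → C x = true)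
    (x : Fin (2 ^ b - 1) → Bool) (hx : ∀ i ∉ A, x i = sr i) (k : ℕ) (hk : k ≤ 2 ^ b - 1) :
    ∃ (m : ℕ) (y : Fin (2 ^ b - 1) → Bool),
      (greedyStep b f C sr)^[m] (zeroStr b, x) = (f^[k] (zeroStr b), y) ∧
      m + hammDist y sr = k + hammDist x sr ∧
      (∀ i ∉ A, y i = sr i) ∧
      ∀ j, 1 ≤ j → j ≤ k → ∀ i : Fin (2 ^ b - 1),
        (i : ℕ) + 1 = bitVal (f^[j] (zeroStr b)) → y i = sr i := by
  induction k with
  | zero => exact ⟨0, x, rfl, rfl, hx, fun j h1 h2 => by omega⟩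
  | succ k ih =>
    obtain ⟨m, y, hm, hd, hy, hfix⟩ := ih (by omega)
    have hadv : (greedyStep b f C sr)^[m + 1] (zeroStr b, x) = (f^[k + 1] (zeroStr b), y) := by
      rw [Function.iterate_succ_apply', hm, greedyStep_advance, Function.iterate_succ_apply']
      rcases Nat.eq_zero_or_pos k with h | h
      · left; subst h; rfl
      · right; exact hfix k h le_rfl
    have hc : f^[k + 1] (zeroStr b) ≠ zeroStr b := by
      have : f^[k + 1] (zeroStr b) ∈ {v | v ≠ zeroStr b} := by
        rw [← hf.2]
        exact ⟨k + 1, ⟨by omega, hk⟩, rfl⟩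
      exact this
    by_cases hw : ∃ i : Fin (2 ^ b - 1),
        (i : ℕ) + 1 = bitVal (f^[k + 1] (zeroStr b)) ∧ y i ≠ sr i
    · obtain ⟨i, hi, hne⟩ := hw
      have hflip := hammDist_flip y sr _ i hi hne
      -- At the addressed index the flipped bit is correct.
      have hgood : ∀ j : Fin (2 ^ b - 1), (j : ℕ) + 1 = bitVal (f^[k + 1] (zeroStr b)) →
          (!(y j)) = sr j := by
        intro j hj
        obtain rfl : j = i := Fin.ext (by omega)
        cases h1 : y j <;> cases h2 : sr j <;> simp_all
      refine ⟨m + 1 + 1, fun j : Fin (2 ^ b - 1) =>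
        if (j : ℕ) + 1 = bitVal (f^[k + 1] (zeroStr b)) then !(y j) else y j, ?_, ?_, ?_, ?_⟩
      · rw [Function.iterate_succ_apply', hadv]
        exact greedyStep_flip b f C sr _ y hc (hA y hy) i hi hne
      · omega
      · intro j hj
        dsimp only
        split_ifs with h
        · exact hgood j h
        · exact hy j hj
      · intro l h1 h2 j hj
        dsimp only
        split_ifs with h
        · exact hgood j h
        · rcases Nat.lt_or_ge k l with hl | hl
          · obtain rfl : l = k + 1 := by omega
            exact absurd hj h
          · exact hfix l h1 hl j hj
    · push Not at hw
      refine ⟨m + 1, y, hadv, by omega, hy, ?_⟩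
      intro l h1 h2 j hj
      rcases Nat.lt_or_ge k l with hl | hl
      · obtain rfl : l = k + 1 := by omega
        exact hw j hj
      · exact hfix l h1 hl j hj

theorem iterate_eq_oneStr (b : ℕ) (hb : 1 ≤ b)
    (f : (Fin b → Bool) → (Fin b → Bool)) (hf : IsControlFunc b f) :
    f^[2 ^ b - 1] (zeroStr b) = oneStr b := by
  have h1 : oneStr b ∈ {v | v ≠ zeroStr b} := fun h => by
    have := congrFun h ⟨0, hb⟩
    simp [oneStr, zeroStr] at this
  rw [← hf.2] at h1
  obtain ⟨k, ⟨-, hk⟩, h⟩ := h1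
  dsimp only at h
  -- `1_b` is reached by time `2^b − 1` and is a fixed point of `f`.
  rw [← Nat.sub_add_cancel hk, Function.iterate_add_apply, h]
  exact Function.iterate_fixed hf.1 _

/-- If `C(x) = true` for every `x` agreeing with `s_reward` outside `A`, then from any
such `x` there is an action sequence reaching `(1_b, s_reward)` from `(0_b, x)` in
exactly `T = 2^b − 1 + d(x, s_reward)` steps. -/
theorem majMDPC_reach_exact (b : ℕ) (hb : 1 ≤ b)
    (f : (Fin b → Bool) → (Fin b → Bool)) (hf : IsControlFunc b f)
    (sr : Fin (2 ^ b - 1) → Bool) (C : (Fin (2 ^ b - 1) → Bool) → Bool)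
    (A : Finset (Fin (2 ^ b - 1)))
    (hA : ∀ x : Fin (2 ^ b - 1) → Bool, (∀ i ∉ A, x i = sr i) → C x = true)
    (x : Fin (2 ^ b - 1) → Bool) (hx : ∀ i ∉ A, x i = sr i) :
    ∃ a : ℕ → Bool,
      majTrajC b f C (zeroStr b, x) a (2 ^ b - 1 + hammDist x sr) = (oneStr b, sr) := by
  obtain ⟨m, y, hm, hd, -, hfix⟩ := greedy_invariant b f hf sr C A hA x hx (2 ^ b - 1) le_rfl
  have hy : y = sr := by
    funext i
    obtain ⟨c, hc⟩ := exists_bitVal_eq b (i + 1) (by omega)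
    have hc0 : c ∈ {v | v ≠ zeroStr b} := by
      rintro rfl
      simp [bitVal, zeroStr] at hc
    rw [← hf.2] at hc0
    obtain ⟨j, ⟨hj1, hj2⟩, hj⟩ := hc0
    dsimp only at hj
    exact hfix j hj1 hj2 i (by rw [hj, hc])
  subst hy
  have hself : hammDist y y = 0 := by simp [hammDist]
  refine ⟨fun t => greedyAct b y ((greedyStep b f C y)^[t] (zeroStr b, x)), ?_⟩
  rw [majTrajC_greedy, ← hd, hself, Nat.add_zero, hm, iterate_eq_oneStr b hb f hf]
end
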